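/- Under the interpolation setting, fix a step t with weights w_{i,t} ≥ 0, Σ_{i=1}^M w_{i,t} = 1, and let θ^{t+1} = θ^t − η·Σ_{i=1}^M w_{i,t} ∇f_i(θ^t) with any step size 0 < η ≤ 1/(4ML·max_i w_{i,t}). Then ‖θ^{t+1} − θ*‖² ≤ ‖θ^t − θ*‖² − η·(f(θ^t) − f(θ*)) + η·δ^t, where δ^t = Σ_{i=1}^M (1/M − w_{i,t})·(f_i(θ^t) − f_i(θ*)). -/

import Mathlib

open scoped InnerProductSpace BigOperators

/-!
Expanding the square, the update moves `‖θ - θ*‖ ^ 2` by `-2η⟪G, θ - θ*⟫ + η ^ 2 ‖G‖ ^ 2`, where `G`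
is the weighted mean of the gradients. Let `D` be the weighted mean of the gaps `f i θ - f i θ*`.
Convexity bounds the linear term by `-2ηD`. A gradient step of size `2η` on `f i` alone lowers
`f i` by at least `η ‖∇ f i θ‖ ^ 2`, and it cannot go below `f i θ*`; averaging over `i` with
Jensen's inequality gives `η ‖G‖ ^ 2 ≤ D`, so the total change is at most `-ηD`.
-/

open scoped Gradient

section SmoothFunction

variable {E : Type*} [NormedAddCommGroup E] [InnerProductSpace ℝ E] [CompleteSpace E]
  {f : E → ℝ} {L t : ℝ} {x : E}

theorem apply_add_le_of_norm_gradient_sub_le (hf : Differentiable ℝ f)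
    (hL : ∀ y, ‖∇ f y - ∇ f x‖ ≤ L * ‖y - x‖) (v : E) :
    f (x + v) ≤ f x + ⟪∇ f x, v⟫_ℝ + L / 2 * ‖v‖ ^ 2 := by
  have hline (s : ℝ) : HasDerivAt (fun r : ℝ ↦ f (x + r • v)) ⟪∇ f (x + s • v), v⟫_ℝ s := by
    have hray : HasDerivAt (fun r : ℝ ↦ x + r • v) v s := by
      simpa using ((hasDerivAt_id s).smul_const v).const_add x
    simpa using! (hf _).hasGradientAt.hasFDerivAt.comp_hasDerivAt s hray
  have hquad (s : ℝ) : HasDerivAt (fun r : ℝ ↦ f x + r * ⟪∇ f x, v⟫_ℝ + L / 2 * ‖v‖ ^ 2 * r ^ 2)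
      (⟪∇ f x, v⟫_ℝ + L * s * ‖v‖ ^ 2) s := by
    convert! (((hasDerivAt_id s).mul_const ⟪∇ f x, v⟫_ℝ).const_add (f x)).add
      ((hasDerivAt_pow 2 s).const_mul (L / 2 * ‖v‖ ^ 2)) using 1
    norm_num
    ring
  have hslope (s : ℝ) (hs : 0 ≤ s) :
      ⟪∇ f (x + s • v), v⟫_ℝ ≤ ⟪∇ f x, v⟫_ℝ + L * s * ‖v‖ ^ 2 := by
    rw [← sub_le_iff_le_add', ← inner_sub_left]
    calc ⟪∇ f (x + s • v) - ∇ f x, v⟫_ℝ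
        ≤ ‖∇ f (x + s • v) - ∇ f x‖ * ‖v‖ := real_inner_le_norm _ _
      _ ≤ L * ‖x + s • v - x‖ * ‖v‖ := by gcongr; exact hL _
      _ = L * s * ‖v‖ ^ 2 := by
        rw [add_sub_cancel_left, norm_smul, Real.norm_of_nonneg hs]
        ring
  have hle := image_le_of_deriv_right_le_deriv_boundary
    (fun s _ ↦ (hline s).continuousAt.continuousWithinAt) (fun s _ ↦ (hline s).hasDerivWithinAt)
    (by simp) (fun s _ ↦ (hquad s).continuousAt.continuousWithinAt)
    (fun s _ ↦ (hquad s).hasDerivWithinAt) (fun s hs ↦ hslope s hs.1)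
    (Set.right_mem_Icc.2 zero_le_one)
  simpa using hle

theorem apply_sub_smul_gradient_le (hf : Differentiable ℝ f)
    (hL : ∀ y, ‖∇ f y - ∇ f x‖ ≤ L * ‖y - x‖) (ht : 0 ≤ t) (hLt : L * t ≤ 1) :
    f (x - t • ∇ f x) ≤ f x - t / 2 * ‖∇ f x‖ ^ 2 := by
  calc f (x - t • ∇ f x)
      ≤ f x + ⟪∇ f x, -(t • ∇ f x)⟫_ℝ + L / 2 * ‖-(t • ∇ f x)‖ ^ 2 := by
        simpa only [sub_eq_add_neg] using apply_add_le_of_norm_gradient_sub_le hf hL (-(t • ∇ f x))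
    _ = f x - t * ‖∇ f x‖ ^ 2 + L * t * (t / 2 * ‖∇ f x‖ ^ 2) := by
        rw [inner_neg_right, real_inner_smul_right, real_inner_self_eq_norm_sq, norm_neg, norm_smul,
          Real.norm_of_nonneg ht]
        ring
    _ ≤ f x - t * ‖∇ f x‖ ^ 2 + 1 * (t / 2 * ‖∇ f x‖ ^ 2) := by gcongr
    _ = f x - t / 2 * ‖∇ f x‖ ^ 2 := by ring

end SmoothFunction

theorem norm_sum_smul_sq_le {ι E : Type*} [SeminormedAddCommGroup E] [NormedSpace ℝ E]
    {s : Finset ι} {w : ι → ℝ} (hw0 : ∀ i ∈ s, 0 ≤ w i) (hw1 : ∑ i ∈ s, w i = 1) (g : ι → E) :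
    ‖∑ i ∈ s, w i • g i‖ ^ 2 ≤ ∑ i ∈ s, w i * ‖g i‖ ^ 2 :=
  (convexOn_univ_norm.pow (fun _ _ ↦ norm_nonneg _) 2).map_sum_le hw0 hw1 fun _ _ ↦ Set.mem_univ _

theorem norm_sub_smul_sub_sq_le {E : Type*} [SeminormedAddCommGroup E] [InnerProductSpace ℝ E]
    {x z G : E} {η D : ℝ} (hη : 0 ≤ η) (hG : η * ‖G‖ ^ 2 ≤ D) (hD : D ≤ ⟪G, x - z⟫_ℝ) :
    ‖x - η • G - z‖ ^ 2 ≤ ‖x - z‖ ^ 2 - η * D := by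
  calc ‖x - η • G - z‖ ^ 2
      = ‖x - z‖ ^ 2 - 2 * η * ⟪G, x - z⟫_ℝ + η * (η * ‖G‖ ^ 2) := by
        rw [sub_right_comm, norm_sub_sq_real, real_inner_smul_right, real_inner_comm, norm_smul,
          Real.norm_of_nonneg hη]
        ring
    _ ≤ ‖x - z‖ ^ 2 - 2 * η * D + η * D := by gcongr
    _ = ‖x - z‖ ^ 2 - η * D := by ring

section WeightedStep

variable {ι : Type*} [Fintype ι]

theorem sum_le_card_mul_iSup (w : ι → ℝ) : ∑ i, w i ≤ Fintype.card ι * ⨆ i, w i := by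
  simpa using Finset.sum_le_card_nsmul Finset.univ w _
    fun i _ ↦ le_ciSup (Set.finite_range w).bddAbove i

theorem four_mul_mul_le_one_of_le_one_div_iSup {w : ι → ℝ} {L η : ℝ} (hw1 : ∑ i, w i = 1)
    (hL : 0 < L) (hη : η ≤ 1 / (4 * (Fintype.card ι : ℝ) * L * ⨆ i, w i)) :
    4 * L * η ≤ 1 := by
  have hcard : 1 ≤ (Fintype.card ι : ℝ) * ⨆ i, w i := hw1 ▸ sum_le_card_mul_iSup w
  calc 4 * L * η ≤ 4 * L * (1 / (4 * (Fintype.card ι : ℝ) * L * ⨆ i, w i)) := by gcongr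
    _ = 1 / ((Fintype.card ι : ℝ) * ⨆ i, w i) := by field_simp
    _ ≤ 1 := (div_le_one (by positivity)).2 hcard

variable {E : Type*} [NormedAddCommGroup E] [InnerProductSpace ℝ E] [CompleteSpace E]
  {f : ι → E → ℝ} {w : ι → ℝ} {L η : ℝ} {θ θstar : E}

theorem sum_mul_sub_le_inner_sum_smul_gradient (hw0 : ∀ i, 0 ≤ w i)
    (hconv : ∀ i, f i θ + ⟪∇ (f i) θ, θstar - θ⟫_ℝ ≤ f i θstar) :
    ∑ i, w i * (f i θ - f i θstar) ≤ ⟪∑ i, w i • ∇ (f i) θ, θ - θstar⟫_ℝ := by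
  rw [sum_inner]
  refine Finset.sum_le_sum fun i _ ↦ ?_
  rw [real_inner_smul_left, ← neg_sub θstar, inner_neg_right]
  exact mul_le_mul_of_nonneg_left (by linarith [hconv i]) (hw0 i)

theorem mul_norm_sum_smul_gradient_sq_le (hdiff : ∀ i, Differentiable ℝ (f i))
    (hsmooth : ∀ i y, ‖∇ (f i) y - ∇ (f i) θ‖ ≤ L * ‖y - θ‖)
    (hmin : ∀ i y, f i θstar ≤ f i y) (hw0 : ∀ i, 0 ≤ w i) (hw1 : ∑ i, w i = 1)
    (hη0 : 0 ≤ η) (hη1 : 2 * L * η ≤ 1) :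
    η * ‖∑ i, w i • ∇ (f i) θ‖ ^ 2 ≤ ∑ i, w i * (f i θ - f i θstar) := by
  have hgap (i : ι) : η * ‖∇ (f i) θ‖ ^ 2 ≤ f i θ - f i θstar := by
    have hdecrease := apply_sub_smul_gradient_le (t := 2 * η) (hdiff i) (hsmooth i)
      (by positivity) (by linarith)
    linarith [hmin i (θ - (2 * η) • ∇ (f i) θ)]
  calc η * ‖∑ i, w i • ∇ (f i) θ‖ ^ 2
      ≤ η * ∑ i, w i * ‖∇ (f i) θ‖ ^ 2 := by
        gcongr
        exact norm_sum_smul_sq_le (fun i _ ↦ hw0 i) hw1 _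
    _ = ∑ i, w i * (η * ‖∇ (f i) θ‖ ^ 2) := by
        rw [Finset.mul_sum]
        exact Finset.sum_congr rfl fun i _ ↦ mul_left_comm _ _ _
    _ ≤ ∑ i, w i * (f i θ - f i θstar) :=
        Finset.sum_le_sum fun i _ ↦ mul_le_mul_of_nonneg_left (hgap i) (hw0 i)

/-- The weights `p` define the objective `∑ i, p i * f i`; the average is `p i = 1 / M`. -/
theorem stmt_3_general (hdiff : ∀ i, Differentiable ℝ (f i))
    (hconv : ∀ i, f i θ + ⟪∇ (f i) θ, θstar - θ⟫_ℝ ≤ f i θstar)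
    (hsmooth : ∀ i y, ‖∇ (f i) y - ∇ (f i) θ‖ ≤ L * ‖y - θ‖)
    (hmin : ∀ i y, f i θstar ≤ f i y) (hw0 : ∀ i, 0 ≤ w i) (hw1 : ∑ i, w i = 1)
    (hη0 : 0 ≤ η) (hη1 : 2 * L * η ≤ 1) (p : ι → ℝ) :
    ‖θ - η • ∑ i, w i • ∇ (f i) θ - θstar‖ ^ 2
      ≤ ‖θ - θstar‖ ^ 2 - η * (∑ i, p i * f i θ - ∑ i, p i * f i θstar)
        + η * ∑ i, (p i - w i) * (f i θ - f i θstar) := by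
  have hstep := norm_sub_smul_sub_sq_le hη0
    (mul_norm_sum_smul_gradient_sq_le hdiff hsmooth hmin hw0 hw1 hη0 hη1)
    (sum_mul_sub_le_inner_sum_smul_gradient hw0 hconv)
  have hexcess : ∑ i, (p i - w i) * (f i θ - f i θstar)
      = (∑ i, p i * f i θ - ∑ i, p i * f i θstar) - ∑ i, w i * (f i θ - f i θstar) := by
    simp only [sub_mul, Finset.sum_sub_distrib, mul_sub]
    ring
  rw [hexcess]
  linarith

end WeightedStep

/-- One step of reweighted full gradient descent under the interpolation regime,
with step size `0 < η ≤ 1/(4ML·max_i w_i)`: descent inequality with the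
reweighting excess term `δ^t`. -/
theorem stmt_3 {d M : ℕ} (hM : 0 < M) (L : ℝ) (hL : 0 < L)
    (f : Fin M → EuclideanSpace ℝ (Fin d) → ℝ)
    (hdiff : ∀ i, Differentiable ℝ (f i))
    (hconv : ∀ i, ∀ θ₁ θ₂ : EuclideanSpace ℝ (Fin d),
      f i θ₂ + ⟪gradient (f i) θ₂, θ₁ - θ₂⟫_ℝ ≤ f i θ₁)
    (hsmooth : ∀ i, ∀ θ θ' : EuclideanSpace ℝ (Fin d),
      ‖gradient (f i) θ - gradient (f i) θ'‖ ≤ L * ‖θ - θ'‖)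
    (θstar : EuclideanSpace ℝ (Fin d))
    (hinterp : ∀ i θ, f i θstar ≤ f i θ)
    (w : Fin M → ℝ)
    (hw0 : ∀ i, 0 ≤ w i)
    (hw1 : ∑ i, w i = 1)
    (η : ℝ) (hη0 : 0 < η)
    (hη1 : η ≤ 1 / (4 * (M : ℝ) * L * (⨆ i, w i)))
    (θt θnext : EuclideanSpace ℝ (Fin d))
    (hupd : θnext = θt - η • ∑ i, w i • gradient (f i) θt) :
    ‖θnext - θstar‖ ^ 2
      ≤ ‖θt - θstar‖ ^ 2
        - η * ((1 / (M : ℝ)) * ∑ i, f i θt - (1 / (M : ℝ)) * ∑ i, f i θstar)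
        + η * ∑ i, ((1 / (M : ℝ)) - w i) * (f i θt - f i θstar) := by
  have hLη : 4 * L * η ≤ 1 :=
    four_mul_mul_le_one_of_le_one_div_iSup hw1 hL (by rwa [Fintype.card_fin])
  simpa only [hupd, Finset.mul_sum] using stmt_3_general hdiff (fun i ↦ hconv i θstar θt)
    (fun i y ↦ hsmooth i y θt) hinterp hw0 hw1 hη0.le (by linarith) fun _ ↦ 1 / (M : ℝ)
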